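/- Let Γ be a finite n-player extensive-form game with imperfect information, chance, and perfect recall, and let η be any lower-bound function. Then there exists a distribution μ ∈ Δ_Π such that following recommendations is an NE of the perturbed extended game (Γ^ext(μ), η). (Such a μ is an EFCE of the corresponding perturbed game; consequently, the trembling LP for EFPCE is always unbounded.) -/

import Mathlib

open scoped BigOperators Classical
open Filter

noncomputable section

/-- A finite `n`-player extensive-form game with imperfect information, chance,
and perfect recall.  Nodes are identified with the list of actions on the path
from the root (so a node `h` is its own action sequence `σ(h)`). -/
structure EFG (n : ℕ) where
  /-- The (global) set of actions. -/
  Action : Type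
  [finA : Fintype Action]
  [deqA : DecidableEq Action]
  /-- Information sets (of all players). -/
  Infoset : Type
  [finI : Fintype Infoset]
  [deqI : DecidableEq Infoset]
  /-- The set of histories (nodes), each identified by its action sequence. -/
  H : Finset (List Action)
  root_mem : ([] : List Action) ∈ H
  prefix_closed : ∀ ⦃h : List Action⦄, h ∈ H → ∀ ⦃h' : List Action⦄, h' <+: h → h' ∈ H
  /-- Actions available at a node (empty iff the node is terminal). -/
  avail : List Action → Finset Action
  child_iff : ∀ h ∈ H, ∀ a : Action, ((h ++ [a]) ∈ H ↔ a ∈ avail h)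
  /-- The infoset controlling a nonterminal node; `none` means chance moves. -/
  ctrl : List Action → Option Infoset
  /-- The player owning an infoset. -/
  infPlayer : Infoset → Fin n
  /-- The actions available at an infoset. -/
  infActions : Infoset → Finset Action
  infActions_nonempty : ∀ I : Infoset, (infActions I).Nonempty
  ctrl_actions : ∀ h ∈ H, ∀ I : Infoset, ctrl h = some I → avail h = infActions I
  /-- Action sets of distinct infosets are disjoint. -/
  infActions_disjoint : ∀ I J : Infoset, I ≠ J → Disjoint (infActions I) (infActions J)
  /-- Probabilities of chance moves. -/
  chanceProb : List Action → Action → ℝ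
  chance_pos : ∀ h ∈ H, avail h ≠ ∅ → ctrl h = none → ∀ a ∈ avail h, 0 < chanceProb h a
  chance_sum : ∀ h ∈ H, avail h ≠ ∅ → ctrl h = none → ∑ a ∈ avail h, chanceProb h a = 1
  /-- Utilities of the players over terminal nodes. -/
  util : Fin n → List Action → ℝ
  /-- `ownSeq I` is `σ_i(I)`, the sequence of player `i`'s own actions leading to `I`. -/
  ownSeq : Infoset → List Action
  /-- Perfect recall: all nodes of an infoset are reached by the same sequence of
  the owning player's actions. -/
  perfect_recall : ∀ I : Infoset, ∀ h ∈ H, ctrl h = some I →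
    h.filter (fun a => decide (∃ J : Infoset, infPlayer J = infPlayer I ∧ a ∈ infActions J))
      = ownSeq I

attribute [instance] EFG.finA EFG.deqA EFG.finI EFG.deqI

namespace EFG

variable {n : ℕ}

/-- Pure strategies `Π_i` of player `i`: an action at each of her infosets. -/
abbrev PureStrat (G : EFG n) (i : Fin n) :=
  ∀ J : {J : G.Infoset // G.infPlayer J = i}, {a : G.Action // a ∈ G.infActions J.1}

/-- Pure strategy profiles `Π`. -/
abbrev Profile (G : EFG n) := ∀ i : Fin n, G.PureStrat i

/-- Terminal nodes `Z`. -/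
def terminalSet (G : EFG n) : Finset (List G.Action) := G.H.filter (fun h => G.avail h = ∅)

/-- `μ ∈ Δ_Π`. -/
def IsDistribution (G : EFG n) (μ : G.Profile → ℝ) : Prop :=
  (∀ π, 0 ≤ μ π) ∧ ∑ π : G.Profile, μ π = 1

/-- `h` is a node belonging to the infoset `I`. -/
def InfNode (G : EFG n) (I : G.Infoset) (h : List G.Action) : Prop :=
  h ∈ G.H ∧ G.ctrl h = some I

/-- `I ≺ J` : some node of `J` is a (strict) descendant of some node of `I`. -/
def infLt (G : EFG n) (I J : G.Infoset) : Prop :=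
  ∃ h k, G.InfNode I h ∧ G.InfNode J k ∧ h <+: k ∧ h ≠ k

/-- `I ⪯ J`. -/
def infLe (G : EFG n) (I J : G.Infoset) : Prop := I = J ∨ G.infLt I J

/-- Behavior strategy profiles: `β i a` is the probability with which player `i`
plays action `a` (at the unique infoset where `a` is available). -/
def IsBehavior (G : EFG n) (β : Fin n → G.Action → ℝ) : Prop :=
  (∀ i a, 0 ≤ β i a ∧ β i a ≤ 1) ∧
  ∀ I : G.Infoset, ∑ a ∈ G.infActions I, β (G.infPlayer I) a = 1

/-- Probability of traversing the path `rest` starting from node `pre`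
when players play the behavior profile `β` and chance plays its fixed probabilities. -/
def reachAux (G : EFG n) (β : Fin n → G.Action → ℝ) :
    List G.Action → List G.Action → ℝ
  | _, [] => 1
  | pre, a :: rest =>
    (match G.ctrl pre with
     | some I => β (G.infPlayer I) a
     | none => G.chanceProb pre a) * reachAux G β (pre ++ [a]) rest

/-- Probability of reaching node `z` under behavior profile `β`. -/
def reach (G : EFG n) (β : Fin n → G.Action → ℝ) (z : List G.Action) : ℝ :=
  G.reachAux β [] z

/-- Expected utility of player `i` under behavior profile `β`. -/
def EU (G : EFG n) (i : Fin n) (β : Fin n → G.Action → ℝ) : ℝ :=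
  ∑ z ∈ G.terminalSet, G.reach β z * G.util i z

/-- Nash equilibrium in behavior strategies. -/
def IsNE (G : EFG n) (β : Fin n → G.Action → ℝ) : Prop :=
  G.IsBehavior β ∧ ∀ (i : Fin n) (βi : G.Action → ℝ),
    G.IsBehavior (Function.update β i βi) →
    G.EU i (Function.update β i βi) ≤ G.EU i β

/-- A valid lower-bound (tremble) function `η`. -/
def IsLowerBound (G : EFG n) (η : G.Action → ℝ) : Prop :=
  (∀ a, 0 < η a ∧ η a < 1) ∧ ∀ I : G.Infoset, ∑ a ∈ G.infActions I, η a < 1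

/-- `β` respects the lower bounds `η` of a perturbed game. -/
def Respects (G : EFG n) (η : G.Action → ℝ) (β : Fin n → G.Action → ℝ) : Prop :=
  ∀ I : G.Infoset, ∀ a ∈ G.infActions I, η a ≤ β (G.infPlayer I) a

/-- Nash equilibrium of the perturbed game `(Γ, η)`. -/
def IsPertNE (G : EFG n) (η : G.Action → ℝ) (β : Fin n → G.Action → ℝ) : Prop :=
  G.IsBehavior β ∧ G.Respects η β ∧
  ∀ (i : Fin n) (βi : G.Action → ℝ),
    G.IsBehavior (Function.update β i βi) → G.Respects η (Function.update β i βi) →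
    G.EU i (Function.update β i βi) ≤ G.EU i β

/-- Perfect equilibrium (Selten): a limit point of NEs of perturbed games with
vanishing trembles. -/
def IsPE (G : EFG n) (β : Fin n → G.Action → ℝ) : Prop :=
  ∃ η : ℕ → G.Action → ℝ, (∀ t, G.IsLowerBound (η t)) ∧
    (∀ a, Tendsto (fun t => η t a) atTop (nhds 0)) ∧
    ∃ βs : ℕ → (Fin n → G.Action → ℝ), (∀ t, G.IsPertNE (η t) (βs t)) ∧
      MapClusterPt β atTop βs

/-! ### The extended game `Γ^ext(μ)` -/

/-- The information available at infoset `I` of the extended game (besides `I`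
itself): the recommendations received at all own infosets `J ⪯ I`. -/
abbrev RecInfo (G : EFG n) (I : G.Infoset) :=
  ∀ J : {J : G.Infoset // G.infPlayer J = G.infPlayer I ∧ G.infLe J I},
    {a : G.Action // a ∈ G.infActions J.1}

/-- A behavior strategy of player `i` in the extended game: a distribution over
actions at each infoset of the extended game. -/
abbrev ExtBehavior (G : EFG n) (i : Fin n) :=
  ∀ I : {I : G.Infoset // G.infPlayer I = i}, G.RecInfo I.1 → G.Action → ℝ

/-- The recommendation information at `I` induced by the recommended profile `π`. -/
def recOf (G : EFG n) (π : G.Profile) (I : G.Infoset) : G.RecInfo I :=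
  fun J => π (G.infPlayer I) ⟨J.1, J.2.1⟩

/-- Validity of a behavior strategy profile of the extended game. -/
def IsExtBehavior (G : EFG n) (δ : ∀ i, G.ExtBehavior i) : Prop :=
  ∀ (i : Fin n) (I : {I : G.Infoset // G.infPlayer I = i}) (r : G.RecInfo I.1),
    (∀ a, 0 ≤ δ i I r a) ∧ (∑ a ∈ G.infActions I.1, δ i I r a = 1) ∧
    (∀ a, a ∉ G.infActions I.1 → δ i I r a = 0)

/-- Probability of traversing `rest` from `pre` in the extended game when the
profile `π` has been recommended and players play `δ`. -/
def extReachAux (G : EFG n) (δ : ∀ i, G.ExtBehavior i) (π : G.Profile) :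
    List G.Action → List G.Action → ℝ
  | _, [] => 1
  | pre, a :: rest =>
    (match G.ctrl pre with
     | some I => δ (G.infPlayer I) ⟨I, rfl⟩ (G.recOf π I) a
     | none => G.chanceProb pre a) * extReachAux G δ π (pre ++ [a]) rest

/-- Expected utility of player `i` in the extended game `Γ^ext(μ)` under the
behavior strategy profile `δ`. -/
def extEU (G : EFG n) (μ : G.Profile → ℝ) (i : Fin n) (δ : ∀ i, G.ExtBehavior i) : ℝ :=
  ∑ π : G.Profile, μ π * ∑ z ∈ G.terminalSet, G.extReachAux δ π [] z * G.util i z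

/-- `δ` is a Nash equilibrium of the extended game `Γ^ext(μ)`. -/
def ExtIsNE (G : EFG n) (μ : G.Profile → ℝ) (δ : ∀ i, G.ExtBehavior i) : Prop :=
  G.IsExtBehavior δ ∧ ∀ (i : Fin n) (δi : G.ExtBehavior i),
    G.IsExtBehavior (Function.update δ i δi) →
    G.extEU μ i (Function.update δ i δi) ≤ G.extEU μ i δ

/-- The "follow recommendations" strategy profile of the extended game. -/
def followRec (G : EFG n) : ∀ i, G.ExtBehavior i :=
  fun _ I r a => if a = (r ⟨I.1, rfl, Or.inl rfl⟩).1 then 1 else 0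

/-- `η̃(a)`: the maximum probability assignable to `a` at infoset `I` given `η`. -/
def resProb (G : EFG n) (η : G.Action → ℝ) (I : G.Infoset) (a : G.Action) : ℝ :=
  1 - ∑ a' ∈ (G.infActions I).erase a, η a'

/-- Following recommendations in the perturbed extended game `(Γ^ext(μ), η)`:
the recommended action gets all the residual probability, every other action
its lower bound. -/
def followRecPert (G : EFG n) (η : G.Action → ℝ) : ∀ i, G.ExtBehavior i :=
  fun _ I r a =>
    if a ∈ G.infActions I.1 then
      (if a = (r ⟨I.1, rfl, Or.inl rfl⟩).1 then G.resProb η I.1 a else η a)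
    else 0

/-- `δ` respects the lower bounds `η` in the extended game. -/
def ExtRespects (G : EFG n) (η : G.Action → ℝ) (δ : ∀ i, G.ExtBehavior i) : Prop :=
  ∀ (i : Fin n) (I : {I : G.Infoset // G.infPlayer I = i}) (r : G.RecInfo I.1),
    ∀ a ∈ G.infActions I.1, η a ≤ δ i I r a

/-- `δ` is a Nash equilibrium of the perturbed extended game `(Γ^ext(μ), η)`. -/
def ExtIsPertNE (G : EFG n) (μ : G.Profile → ℝ) (η : G.Action → ℝ)
    (δ : ∀ i, G.ExtBehavior i) : Prop :=
  G.IsExtBehavior δ ∧ G.ExtRespects η δ ∧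
  ∀ (i : Fin n) (δi : G.ExtBehavior i),
    G.IsExtBehavior (Function.update δ i δi) → G.ExtRespects η (Function.update δ i δi) →
    G.extEU μ i (Function.update δ i δi) ≤ G.extEU μ i δ

/-- Following recommendations is a perfect equilibrium of `Γ^ext(μ)`. -/
def FollowIsPE (G : EFG n) (μ : G.Profile → ℝ) : Prop :=
  ∃ η : ℕ → G.Action → ℝ, (∀ t, G.IsLowerBound (η t)) ∧
    (∀ a, Tendsto (fun t => η t a) atTop (nhds 0)) ∧
    ∃ δs : ℕ → ∀ i, G.ExtBehavior i, (∀ t, G.ExtIsPertNE μ (η t) (δs t)) ∧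
      MapClusterPt G.followRec atTop δs

/-- Extensive-form correlated equilibrium: following recommendations is an NE of
`Γ^ext(μ)`. -/
def IsEFCE (G : EFG n) (μ : G.Profile → ℝ) : Prop :=
  G.IsDistribution μ ∧ G.ExtIsNE μ G.followRec

/-- Extensive-form perfect correlated equilibrium: following recommendations is
a PE of `Γ^ext(μ)`. -/
def IsEFPCE (G : EFG n) (μ : G.Profile → ℝ) : Prop :=
  G.IsDistribution μ ∧ G.FollowIsPE μ

/-- The product distribution on `Π` induced by a behavior profile `β`:
`μ(π) = ∏_i ∏_{I ∈ 𝓘_i} β_i(π_i(I))`. -/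
def prodDist (G : EFG n) (β : Fin n → G.Action → ℝ) : G.Profile → ℝ :=
  fun π => ∏ i : Fin n, ∏ J : {J : G.Infoset // G.infPlayer J = i}, β i (π i J).1

/-! ### Trigger agents, `ξ^η`, and related sets -/

/-- `Z(I)`: terminal nodes reachable from infoset `I`. -/
def ZI (G : EFG n) (I : G.Infoset) : Finset (List G.Action) :=
  G.terminalSet.filter (fun z => ∃ h, G.InfNode I h ∧ h <+: z)

/-- `Z(I,a)`: terminal nodes reachable by playing `a` at `I`. -/
def ZIa (G : EFG n) (I : G.Infoset) (a : G.Action) : Finset (List G.Action) :=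
  G.terminalSet.filter (fun z => ∃ h, G.InfNode I h ∧ (h ++ [a]) <+: z)

/-- `K ∈ 𝓒(I,a)`: `K` immediately follows `I` when playing `a` (no other infoset
of the same player in between). -/
def ImmSucc (G : EFG n) (I : G.Infoset) (a : G.Action) (K : G.Infoset) : Prop :=
  G.infPlayer K = G.infPlayer I ∧
  ∃ h k, G.InfNode I h ∧ G.InfNode K k ∧ (h ++ [a]) <+: k ∧
    ∀ h' : List G.Action, (h ++ [a]) <+: h' → h' <+: k → h' ≠ k →
      ∀ J : G.Infoset, G.infPlayer J = G.infPlayer I → ¬ G.InfNode J h'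

/-- `Z⊥(I,a)`: terminal nodes reachable by playing `a` at `I` without traversing
any further infoset of the same player. -/
def Zbot (G : EFG n) (I : G.Infoset) (a : G.Action) : Finset (List G.Action) :=
  (G.ZIa I a).filter (fun z => ¬ ∃ K, G.ImmSucc I a K ∧ z ∈ G.ZI K)

/-- `π_i ∈ Π_i(a)`: the pure strategy `πi` prescribes action `a`. -/
def Prescribes (G : EFG n) {i : Fin n} (πi : G.PureStrat i) (a : G.Action) : Prop :=
  ∃ J, (πi J).1 = a

/-- `π_i ∈ Π_i(z)`: `πi` plays so as to reach the node `z`. -/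
def PlaysToNode (G : EFG n) {i : Fin n} (πi : G.PureStrat i) (z : List G.Action) : Prop :=
  ∀ (k : List G.Action) (a : G.Action) (J : G.Infoset) (hJ : G.infPlayer J = i),
    G.ctrl k = some J → (k ++ [a]) <+: z → (πi ⟨J, hJ⟩).1 = a

/-- `π_i ∈ Π_i(I)`: `πi` plays so as to reach the infoset `I` whenever possible. -/
def PlaysToInf (G : EFG n) {i : Fin n} (πi : G.PureStrat i) (I : G.Infoset) : Prop :=
  ∀ h, G.InfNode I h → G.PlaysToNode πi h

/-- A distribution `μ̂_i ∈ Δ_{Π_i(I)}`. -/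
def IsDistOn (G : EFG n) {i : Fin n} (μhat : G.PureStrat i → ℝ) (I : G.Infoset) : Prop :=
  (∀ πi, 0 ≤ μhat πi) ∧ (∑ πi : G.PureStrat i, μhat πi = 1) ∧
  ∀ πi, ¬ G.PlaysToInf πi I → μhat πi = 0

/-- `p_c(z)`: product of chance probabilities on the path to `z`. -/
def pcAux (G : EFG n) : List G.Action → List G.Action → ℝ
  | _, [] => 1
  | pre, a :: rest =>
    (match G.ctrl pre with
     | some _ => 1
     | none => G.chanceProb pre a) * pcAux G (pre ++ [a]) rest

def pc (G : EFG n) (z : List G.Action) : ℝ := G.pcAux [] z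

/-- Auxiliary for `ξ^η(z, π)`. -/
def xiFullAux (G : EFG n) (η : G.Action → ℝ) (π : G.Profile) :
    List G.Action → List G.Action → ℝ
  | _, [] => 1
  | pre, a :: rest =>
    (match G.ctrl pre with
     | some J =>
       if ((π (G.infPlayer J)) ⟨J, rfl⟩).1 = a then G.resProb η J a else η a
     | none => G.chanceProb pre a) * xiFullAux G η π (pre ++ [a]) rest

/-- `ξ^η(z, π)`: probability of reaching `z` when `π` is recommended and all
players obey, with trembles `η`. -/
def xiFull (G : EFG n) (η : G.Action → ℝ) (π : G.Profile) (z : List G.Action) : ℝ :=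
  G.xiFullAux η π [] z

/-- Auxiliary for `ξ^η(z, I, π)`. -/
def xiFromAux (G : EFG n) (η : G.Action → ℝ) (i : Fin n) (I : G.Infoset) (π : G.Profile) :
    List G.Action → List G.Action → ℝ
  | _, [] => 1
  | pre, a :: rest =>
    (match G.ctrl pre with
     | some J =>
       if G.infPlayer J = i ∧ (∃ h, G.InfNode I h ∧ h <+: pre) then 1
       else if ((π (G.infPlayer J)) ⟨J, rfl⟩).1 = a then G.resProb η J a else η a
     | none => G.chanceProb pre a) * xiFromAux G η i I π (pre ++ [a]) rest

/-- `ξ^η(z, I, π)`: as `ξ^η(z, π)`, excluding player `i`'s actions leading from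
`I` to `z`. -/
def xiFrom (G : EFG n) (η : G.Action → ℝ) (i : Fin n) (I : G.Infoset) (π : G.Profile)
    (z : List G.Action) : ℝ :=
  G.xiFromAux η i I π [] z

/-- Auxiliary for `ξ^η(z, π̂_i)` (only player `i`'s actions from `I` to `z`). -/
def xiOwnAux (G : EFG n) (η : G.Action → ℝ) (i : Fin n) (I : G.Infoset)
    (πi : G.PureStrat i) : List G.Action → List G.Action → ℝ
  | _, [] => 1
  | pre, a :: rest =>
    (match G.ctrl pre with
     | some J =>
       if hJ : G.infPlayer J = i ∧ (∃ h, G.InfNode I h ∧ h <+: pre) then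
         (if (πi ⟨J, hJ.1⟩).1 = a then G.resProb η J a else η a)
       else 1
     | none => 1) * xiOwnAux G η i I πi (pre ++ [a]) rest

/-- `ξ^η(z, π̂_i)` for `π̂_i ∈ Π_i(I)`: product over player `i`'s actions from
`I` to `z`. -/
def xiOwn (G : EFG n) (η : G.Action → ℝ) (i : Fin n) (I : G.Infoset)
    (πi : G.PureStrat i) (z : List G.Action) : ℝ :=
  G.xiOwnAux η i I πi [] z

/-- `p^{η,I,a}_{μ,μ̂_i}(z)`: probability of reaching `z ∈ Z(I)` when the
`(I,a,μ̂_i)`-trigger agent gets triggered, in the perturbed extended game. -/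
def pTrig (G : EFG n) (η : G.Action → ℝ) (μ : G.Profile → ℝ) (i : Fin n)
    (I : G.Infoset) (a : G.Action) (μhat : G.PureStrat i → ℝ) (z : List G.Action) : ℝ :=
  (∑ π : G.Profile, if G.Prescribes (π i) a then G.xiFrom η i I π z * μ π else 0) *
  (∑ πi : G.PureStrat i, if G.PlaysToInf πi I then G.xiOwn η i I πi z * μhat πi else 0)

end EFG

/-!
Payoffs under obedient play with trembles `η` make the pure strategy profiles of `Γ` the profiles of
a finite strategic-form game. We take for `μ` a correlated equilibrium of that game. One exists by
the argument of Hart and Schmeidler: by a theorem of the alternative it is enough to balance every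
nonnegative system of weights on the deviations that play `t` when told `s`, and a product of
stationary distributions, one per player, does this.

A deviation that respects `η` chooses, at each infoset, a mixture of the trembled recommendations;
it therefore plays as if the recommendation had been redrawn there. By perfect recall a path visits
an infoset at most once, so independent redraws at the infosets give the same path probabilities as
a redraw of the whole pure strategy. The deviation is thus a mixture of deviations in the
strategic-form game, and these are not profitable.
-/

section TheoremOfAlternative

variable {P K : Type*} [Fintype P] [Fintype K]

open Matrix in
lemma exists_mem_stdSimplex_vecMul_nonneg (A : Matrix P K ℝ)
    (h : ∀ y : K → ℝ, 0 ≤ y → ∃ x ∈ stdSimplex ℝ P, 0 ≤ x ⬝ᵥ A *ᵥ y) :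
    ∃ x ∈ stdSimplex ℝ P, 0 ≤ x ᵥ* A := by
  by_contra! hneg
  have hdisj : Disjoint (A.vecMulLinear '' stdSimplex ℝ P) (ProperCone.positive ℝ (K → ℝ)) := by
    rw [Set.disjoint_left]
    rintro _ ⟨x, hx, rfl⟩ hxA
    exact hneg x hx hxA
  obtain ⟨f, hf_nonneg, hf_neg⟩ := ProperCone.hyperplane_separation _
    ((convex_stdSimplex ℝ P).linear_image A.vecMulLinear)
    ((isCompact_stdSimplex ℝ P).image A.vecMulLinear.continuous_of_finiteDimensional) hdisj
  have hf : ∀ v, f v = v ⬝ᵥ fun k => f (Pi.single k 1) := fun v => by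
    conv_lhs => rw [pi_eq_sum_univ' v]
    simp [dotProduct, Pi.single]
  obtain ⟨x, hx, hxy⟩ := h (fun k => f (Pi.single k 1)) fun k =>
    hf_nonneg _ (Pi.single_nonneg.2 zero_le_one)
  rw [dotProduct_mulVec, ← hf] at hxy
  exact (hf_neg _ ⟨x, hx, rfl⟩).not_ge hxy

end TheoremOfAlternative

section Stationary

variable {S : Type*} [Fintype S] [Nonempty S]

open Matrix in
lemma exists_mem_stdSimplex_vecMul_eq_zero (A : Matrix S S ℝ) (hA : ∀ s t, s ≠ t → 0 ≤ A s t)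
    (hrow : A *ᵥ 1 = 0) : ∃ x ∈ stdSimplex ℝ S, x ᵥ* A = 0 := by
  obtain ⟨x, hx, hxA⟩ := exists_mem_stdSimplex_vecMul_nonneg A fun y _ => by
    -- On row `s`, all off-diagonal terms compare `y t` to the minimum `y s`.
    obtain ⟨s, hs⟩ := Finite.exists_min y
    have hshift : (A *ᵥ y) s = ∑ t, A s t * (y t - y s) := by
      have hsum : ∑ t, A s t = 0 := by simpa [mulVec, dotProduct] using congrFun hrow s
      simp [mulVec, dotProduct, mul_sub, ← Finset.sum_mul, hsum]
    refine ⟨Pi.single s 1, single_mem_stdSimplex ℝ s, ?_⟩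
    rw [single_one_dotProduct, hshift]
    refine Finset.sum_nonneg fun t _ => ?_
    obtain rfl | hst := eq_or_ne s t
    · simp
    · exact mul_nonneg (hA s t hst) (sub_nonneg.2 (hs t))
  have htotal : ∑ t, (x ᵥ* A) t = 0 := by
    rw [← dotProduct_one, ← dotProduct_mulVec, hrow, dotProduct_zero]
  refine ⟨x, hx, funext fun t => ?_⟩
  exact (Finset.sum_eq_zero_iff_of_nonneg fun t _ => hxA t).1 htotal t (Finset.mem_univ t)

open Matrix in
lemma exists_stationary_distribution (q : S → S → ℝ) (hq : ∀ s t, 0 ≤ q s t) :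
    ∃ x ∈ stdSimplex ℝ S, ∀ t, ∑ s, x s * q s t = x t * ∑ s, q t s := by
  obtain ⟨x, hx, hxA⟩ := exists_mem_stdSimplex_vecMul_eq_zero
    (of q - diagonal fun s => ∑ t, q s t)
    (fun s t hst => by simpa [diagonal_apply_ne _ hst] using hq s t)
    (by ext s; rw [sub_mulVec, Pi.sub_apply, mulVec_diagonal]; simp [mulVec, dotProduct])
  refine ⟨x, hx, fun t => ?_⟩
  have hbalance := congrFun hxA t
  rwa [vecMul_sub, Pi.sub_apply, vecMul_diagonal, Pi.zero_apply, sub_eq_zero] at hbalance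

end Stationary

section CorrelatedEquilibrium

variable {ι : Type*} [DecidableEq ι] {S : ι → Type*}

/-- The loss of player `i` with payoff `u` at the profile `π` from the deviation that plays `t`
instead of `s` whenever `s` is recommended. -/
def swapLoss (u : (∀ i, S i) → ℝ) (i : ι) (s t : S i) (π : ∀ i, S i) : ℝ :=
  if π i = s then u π - u (Function.update π i t) else 0

variable [∀ i, Fintype (S i)]

lemma sum_mul_swapLoss (u : (∀ i, S i) → ℝ) (i : ι) (q : S i → S i → ℝ) (π : ∀ i, S i) :
    ∑ s, ∑ t, q s t * swapLoss u i s t π =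
      ∑ t, q (π i) t * (u π - u (Function.update π i t)) := by
  rw [Finset.sum_comm]
  simp [swapLoss]

variable [Fintype ι]

/-- Aumann's correlated equilibria of the strategic-form game with payoffs `u`, in canonical form:
`μ` is a distribution over recommended profiles, and no player gains by playing `t` whenever `s` is
recommended to her. -/
structure IsCorrelatedEquilibrium (u : ι → (∀ i, S i) → ℝ) (μ : (∀ i, S i) → ℝ) : Prop where
  mem_stdSimplex : μ ∈ stdSimplex ℝ (∀ i, S i)
  swapLoss_nonneg : ∀ i s t, 0 ≤ ∑ π, μ π * swapLoss (u i) i s t π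

lemma IsCorrelatedEquilibrium.sum_mul_deviation_le {u : ι → (∀ i, S i) → ℝ}
    {μ : (∀ i, S i) → ℝ} (hμ : IsCorrelatedEquilibrium u μ) (i : ι) (w : S i → S i → ℝ)
    (hw : ∀ s, w s ∈ stdSimplex ℝ (S i)) :
    ∑ π, μ π * ∑ t, w (π i) t * u i (Function.update π i t) ≤ ∑ π, μ π * u i π := by
  have hloss : ∑ s, ∑ t, w s t * ∑ π, μ π * swapLoss (u i) i s t π =
      ∑ π, μ π * u i π - ∑ π, μ π * ∑ t, w (π i) t * u i (Function.update π i t) := by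
    calc ∑ s, ∑ t, w s t * ∑ π, μ π * swapLoss (u i) i s t π
        = ∑ π, μ π * ∑ s, ∑ t, w s t * swapLoss (u i) i s t π := by
          simp only [Finset.mul_sum, mul_left_comm (w _ _)]
          rw [Finset.sum_comm_cycle]
      _ = ∑ π, μ π * (u i π - ∑ t, w (π i) t * u i (Function.update π i t)) := by
          simp only [sum_mul_swapLoss, mul_sub, Finset.sum_sub_distrib, ← Finset.sum_mul,
            (hw _).2, one_mul]
      _ = _ := by simp only [mul_sub, Finset.sum_sub_distrib]
  have hloss_nonneg : 0 ≤ ∑ s, ∑ t, w s t * ∑ π, μ π * swapLoss (u i) i s t π :=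
    Finset.sum_nonneg fun s _ => Finset.sum_nonneg fun t _ =>
      mul_nonneg ((hw s).1 t) (hμ.swapLoss_nonneg i s t)
  linarith

lemma sum_sum_update_comm {M : Type*} [AddCommMonoid M] (i : ι) (F : (∀ i, S i) → S i → M) :
    ∑ π, ∑ t, F (Function.update π i t) (π i) = ∑ π, ∑ t, F π t := by
  rw [← Fintype.sum_prod_type', ← Fintype.sum_prod_type']
  exact Finset.sum_nbij' (fun p => (Function.update p.1 i p.2, p.1 i))
    (fun p => (Function.update p.1 i p.2, p.1 i)) (by simp) (by simp) (by simp) (by simp) (by simp)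

lemma sum_prod_update_mul_of_stationary (x : ∀ i, S i → ℝ) (i : ι) (q : S i → S i → ℝ)
    (hx : ∀ t, ∑ s, x i s * q s t = x i t * ∑ s, q t s) (π : ∀ i, S i) :
    ∑ s, (∏ j, x j (Function.update π i s j)) * q s (π i) =
      ∑ t, (∏ j, x j (π j)) * q (π i) t := by
  have hprod : ∀ s, ∏ j, x j (Function.update π i s j) =
      x i s * ∏ j ∈ Finset.univ \ {i}, x j (π j) := fun s => by
    simp only [Function.apply_update (fun j => x j) π]
    exact Finset.prod_update_of_mem (Finset.mem_univ i) _ _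
  have hself := hprod (π i)
  rw [Function.update_eq_self] at hself
  simp only [hprod, hself, mul_right_comm _ (Finset.prod _ _)]
  rw [← Finset.sum_mul, hx, ← Finset.sum_mul, ← Finset.mul_sum]

lemma sum_prod_mul_swapLoss_eq_zero (x : ∀ i, S i → ℝ) (i : ι) (q : S i → S i → ℝ)
    (hx : ∀ t, ∑ s, x i s * q s t = x i t * ∑ s, q t s) (u : (∀ i, S i) → ℝ) :
    ∑ π, (∏ j, x j (π j)) * ∑ s, ∑ t, q s t * swapLoss u i s t π = 0 := by
  have hdeviate : ∑ π : ∀ i, S i, ∑ t, (∏ j, x j (π j)) * q (π i) t * u (Function.update π i t) =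
      ∑ π : ∀ i, S i, ∑ t, (∏ j, x j (π j)) * q (π i) t * u π := by
    rw [← sum_sum_update_comm i]
    simp only [Function.update_self, Function.update_idem, Function.update_eq_self,
      ← Finset.sum_mul, sum_prod_update_mul_of_stationary x i q hx]
  simp only [sum_mul_swapLoss, Finset.mul_sum, mul_sub, Finset.sum_sub_distrib, ← mul_assoc,
    hdeviate, sub_self]

lemma prod_mem_stdSimplex {x : ∀ i, S i → ℝ} (hx : ∀ i, x i ∈ stdSimplex ℝ (S i)) :
    (fun π => ∏ i, x i (π i)) ∈ stdSimplex ℝ (∀ i, S i) :=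
  ⟨fun _ => Finset.prod_nonneg fun i _ => (hx i).1 _, by simp [← Fintype.prod_sum, (hx _).2]⟩

lemma exists_mem_stdSimplex_sum_swapLoss_eq_zero [∀ i, Nonempty (S i)]
    (u : ι → (∀ i, S i) → ℝ) (q : ∀ i, S i → S i → ℝ) (hq : ∀ i s t, 0 ≤ q i s t) :
    ∃ x ∈ stdSimplex ℝ (∀ i, S i),
      ∑ i, ∑ π, x π * ∑ s, ∑ t, q i s t * swapLoss (u i) i s t π = 0 := by
  choose x hx hstat using fun i => exists_stationary_distribution (q i) (hq i)
  exact ⟨_, prod_mem_stdSimplex hx, Finset.sum_eq_zero fun i _ =>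
    sum_prod_mul_swapLoss_eq_zero x i (q i) (hstat i) (u i)⟩

theorem exists_isCorrelatedEquilibrium [∀ i, Nonempty (S i)] (u : ι → (∀ i, S i) → ℝ) :
    ∃ μ, IsCorrelatedEquilibrium u μ := by
  obtain ⟨μ, hμ, hloss⟩ := exists_mem_stdSimplex_vecMul_nonneg
    (Matrix.of fun π (k : Σ i, S i × S i) => swapLoss (u k.1) k.1 k.2.1 k.2.2 π) fun y hy => by
      obtain ⟨x, hx, hzero⟩ := exists_mem_stdSimplex_sum_swapLoss_eq_zero u
        (fun i s t => y ⟨i, s, t⟩) fun i s t => hy ⟨i, s, t⟩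
      refine ⟨x, hx, ?_⟩
      rw [Finset.sum_comm] at hzero
      simp only [dotProduct, Matrix.mulVec, Matrix.of_apply, Fintype.sum_sigma,
        Fintype.sum_prod_type, Finset.mul_sum, mul_comm (swapLoss _ _ _ _ _)] at hzero ⊢
      exact hzero.ge
  exact ⟨μ, hμ, fun i s t => hloss ⟨i, s, t⟩⟩

end CorrelatedEquilibrium


lemma sum_mul_prod_of_card_le_one {R B κ : Type*} [CommSemiring R] [Fintype B] {s : Finset κ}
    (hs : s.card ≤ 1) {w : B → R} (hw : ∑ b, w b = 1) (f : B → κ → R) :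
    ∑ b, w b * ∏ k ∈ s, f b k = ∏ k ∈ s, ∑ b, w b * f b k := by
  obtain h | h := Nat.le_one_iff_eq_zero_or_eq_one.1 hs
  · simp [Finset.card_eq_zero.1 h, hw]
  · obtain ⟨k, rfl⟩ := Finset.card_eq_one.1 h
    simp

namespace EFG

variable {n : ℕ} {G : EFG n} {η : G.Action → ℝ}

section Paths

variable {z : List G.Action} {I : G.Infoset} {i : Fin n}

lemma InfNode.mem_infActions {h : List G.Action} {a : G.Action} (hh : G.InfNode I h)
    (hchild : h ++ [a] ∈ G.H) : a ∈ G.infActions I :=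
  G.ctrl_actions h hh.1 I hh.2 ▸ (G.child_iff h hh.1 a).1 hchild

lemma InfNode.eq_of_prefix {h k : List G.Action} (hh : G.InfNode I h) (hk : G.InfNode I k)
    (hle : h <+: k) : h = k := by
  obtain ⟨_ | ⟨a, t⟩, rfl⟩ := hle
  · rw [List.append_nil]
  · have ha : a ∈ G.infActions I := hh.mem_infActions (G.prefix_closed hk.1 ⟨t, by simp⟩)
    have hown : ∃ J, G.infPlayer J = G.infPlayer I ∧ a ∈ G.infActions J := ⟨I, rfl, ha⟩
    have hrecall := (G.perfect_recall I _ hk.1 hk.2).trans (G.perfect_recall I h hh.1 hh.2).symm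
    simp [hown] at hrecall

/-- The positions on the path to `z` at which the infoset `I` is to move. -/
def visits (G : EFG n) (z : List G.Action) (I : G.Infoset) : Finset (Fin z.length) :=
  Finset.univ.filter fun k => G.ctrl (z.take k) = some I

lemma mem_visits {k : Fin z.length} : k ∈ G.visits z I ↔ G.ctrl (z.take k) = some I := by
  simp [visits]

lemma infNode_of_mem_visits (hz : z ∈ G.H) {k : Fin z.length} (hk : k ∈ G.visits z I) :
    G.InfNode I (z.take k) :=
  ⟨G.prefix_closed hz (List.take_prefix k z), mem_visits.1 hk⟩

lemma getElem_mem_infActions_of_mem_visits (hz : z ∈ G.H) {k : Fin z.length}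
    (hk : k ∈ G.visits z I) : z[k] ∈ G.infActions I := by
  refine (infNode_of_mem_visits hz hk).mem_infActions (G.prefix_closed hz ?_)
  simpa using List.take_prefix (k + 1) z

lemma card_visits_le_one (hz : z ∈ G.H) (I : G.Infoset) : (G.visits z I).card ≤ 1 := by
  refine Finset.card_le_one.2 fun k hk l hl => ?_
  wlog hkl : k ≤ l generalizing k l
  · exact (this l hl k hk (le_of_not_ge hkl)).symm
  have hnode := (infNode_of_mem_visits hz hk).eq_of_prefix (infNode_of_mem_visits hz hl)
    (List.take_prefix_take_left hkl)
  have hlen := congrArg List.length hnode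
  simp only [List.length_take] at hlen
  omega

/-- What a player recommended the pure strategy `s` has been told when her infoset `J` is reached;
this is `EFG.recOf`, depending only on her own component of the recommended profile. -/
def ownRec (s : G.PureStrat i) (J : {J : G.Infoset // G.infPlayer J = i}) : G.RecInfo J.1 :=
  fun K => s ⟨K.1, K.2.1.trans J.2⟩

/-- The probability of the action `a` at the node `h` of the extended game, when the profile `π`
has been recommended and the players play `δ`. -/
def moveProb (δ : ∀ i, G.ExtBehavior i) (π : G.Profile) (h : List G.Action) (a : G.Action) : ℝ :=
  match G.ctrl h with
  | some I => δ (G.infPlayer I) ⟨I, rfl⟩ (G.recOf π I) a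
  | none => G.chanceProb h a

lemma moveProb_of_ctrl_eq_some {δ : ∀ i, G.ExtBehavior i} {π : G.Profile} {h : List G.Action}
    (hI : G.ctrl h = some I) (a : G.Action) :
    moveProb δ π h a = δ (G.infPlayer I) ⟨I, rfl⟩ (ownRec (π (G.infPlayer I)) ⟨I, rfl⟩) a := by
  simp only [moveProb, hI]
  rfl

lemma extReachAux_eq_prod_moveProb (δ : ∀ i, G.ExtBehavior i) (π : G.Profile)
    (pre rest : List G.Action) :
    G.extReachAux δ π pre rest =
      ∏ k : Fin rest.length, moveProb δ π (pre ++ rest.take k) rest[k] := by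
  induction rest generalizing pre with
  | nil => simp [extReachAux]
  | cons a rest ih =>
    rw [extReachAux, ih]
    simp [Fin.prod_univ_succ, moveProb]

/-- The contribution to a path probability of a move by chance or by an opponent of player `i`:
`EFG.moveProb`, replaced by `1` at the nodes of player `i`. -/
def othersMoveProb (δ : ∀ i, G.ExtBehavior i) (π : G.Profile) (i : Fin n) (h : List G.Action)
    (a : G.Action) : ℝ :=
  if ∃ J, G.infPlayer J = i ∧ G.ctrl h = some J then 1 else moveProb δ π h a

lemma moveProb_eq_othersMoveProb_mul_prod (δ : ∀ i, G.ExtBehavior i) (π : G.Profile) (i : Fin n)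
    (h : List G.Action) (a : G.Action) :
    moveProb δ π h a = othersMoveProb δ π i h a *
      ∏ J : {J : G.Infoset // G.infPlayer J = i},
        if G.ctrl h = some J.1 then δ i J (ownRec (π i) J) a else 1 := by
  by_cases hown : ∃ J, G.infPlayer J = i ∧ G.ctrl h = some J
  · obtain ⟨I, rfl, hI⟩ := hown
    rw [othersMoveProb, if_pos ⟨I, rfl, hI⟩, one_mul, moveProb_of_ctrl_eq_some hI,
      Finset.prod_eq_single ⟨I, rfl⟩]
    · rw [if_pos hI]
    · exact fun J _ hJ => if_neg fun hctrl =>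
        hJ (Subtype.ext (Option.some.inj (hctrl.symm.trans hI)))
    · simp
  · rw [othersMoveProb, if_neg hown, Finset.prod_eq_one, mul_one]
    exact fun J _ => if_neg fun hctrl => hown ⟨J.1, J.2, hctrl⟩

lemma extReachAux_nil_eq_mul_prod_visits (δ : ∀ i, G.ExtBehavior i) (π : G.Profile) (i : Fin n)
    (z : List G.Action) :
    G.extReachAux δ π [] z =
      (∏ k : Fin z.length, othersMoveProb δ π i (z.take k) z[k]) *
        ∏ J : {J : G.Infoset // G.infPlayer J = i},
          ∏ k ∈ G.visits z J.1, δ i J (ownRec (π i) J) z[k] := by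
  simp only [extReachAux_eq_prod_moveProb, List.nil_append,
    moveProb_eq_othersMoveProb_mul_prod δ π i, Finset.prod_mul_distrib, visits, Finset.prod_filter]
  rw [Finset.prod_comm]

lemma othersMoveProb_congr {δ δ' : ∀ i, G.ExtBehavior i} {π π' : G.Profile}
    (hδ : ∀ j, j ≠ i → δ j = δ' j) (hπ : ∀ j, j ≠ i → π j = π' j) :
    othersMoveProb δ π i = othersMoveProb δ' π' i := by
  funext h a
  unfold othersMoveProb
  split_ifs with hown
  · rfl
  · unfold moveProb
    split
    · next I hI =>
      have hne : G.infPlayer I ≠ i := fun hi => hown ⟨I, hi, hI⟩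
      have hrec : G.recOf π I = G.recOf π' I := funext fun J => congrFun (hπ _ hne) _
      rw [hδ _ hne, hrec]
    · rfl

end Paths

/-- The probability left at the infoset `I` once each action has received its lower bound. -/
def residualMass (η : G.Action → ℝ) (I : G.Infoset) : ℝ := 1 - ∑ a ∈ G.infActions I, η a

/-- The probability of playing `a` at the infoset `I` when the recommendation `b` is followed
subject to the lower bounds `η`. -/
def trembleProb (η : G.Action → ℝ) (I : G.Infoset) (b a : G.Action) : ℝ :=
  η a + if a = b then residualMass η I else 0

section FollowRecommendations

variable {i : Fin n} (J : {J : G.Infoset // G.infPlayer J = i})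

lemma followRecPert_eq_trembleProb (r : G.RecInfo J.1) {a : G.Action}
    (ha : a ∈ G.infActions J.1) :
    G.followRecPert η i J r a = trembleProb η J.1 (r ⟨J.1, rfl, Or.inl rfl⟩).1 a := by
  have hres : G.resProb η J.1 a = η a + residualMass η J.1 := by
    rw [resProb, residualMass, ← Finset.add_sum_erase _ _ ha]
    ring
  rw [followRecPert, trembleProb, if_pos ha, hres]
  split_ifs <;> simp

lemma sum_trembleProb {I : G.Infoset} {b : G.Action} (hb : b ∈ G.infActions I) :
    ∑ a ∈ G.infActions I, trembleProb η I b a = 1 := by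
  simp [trembleProb, Finset.sum_add_distrib, hb, residualMass]

lemma extRespects_followRecPert (hη : ∀ I, ∑ a ∈ G.infActions I, η a ≤ 1) :
    G.ExtRespects η (G.followRecPert η) := by
  intro i J r a ha
  rw [followRecPert_eq_trembleProb J r ha]
  refine le_add_of_nonneg_right ?_
  split_ifs
  exacts [sub_nonneg.2 (hη J.1), le_rfl]

lemma isExtBehavior_followRecPert (hη_nonneg : ∀ I, ∀ a ∈ G.infActions I, 0 ≤ η a)
    (hη_sum : ∀ I, ∑ a ∈ G.infActions I, η a ≤ 1) : G.IsExtBehavior (G.followRecPert η) := by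
  intro i J r
  have hunavailable : ∀ a, a ∉ G.infActions J.1 → G.followRecPert η i J r a = 0 :=
    fun a ha => if_neg ha
  refine ⟨fun a => ?_, ?_, hunavailable⟩
  · by_cases ha : a ∈ G.infActions J.1
    · exact (hη_nonneg J.1 a ha).trans (extRespects_followRecPert hη_sum i J r a ha)
    · exact (hunavailable a ha).ge
  · rw [Finset.sum_congr rfl fun a ha => followRecPert_eq_trembleProb J r ha]
    exact sum_trembleProb (Subtype.prop _)

end FollowRecommendations

section Deviation

/-- The weights that represent the distribution `d` at the infoset `I` as a mixture of obedient
plays: if the recommendation is redrawn to be `b` with probability `residualWeight η I d b` and then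
followed with trembles, the action has distribution `d`. -/
def residualWeight (η : G.Action → ℝ) (I : G.Infoset) (d : G.Action → ℝ)
    (b : G.infActions I) : ℝ :=
  (d b - η b) / residualMass η I

lemma sum_residualWeight {I : G.Infoset} {d : G.Action → ℝ}
    (hη : ∑ a ∈ G.infActions I, η a < 1) (hd : ∑ a ∈ G.infActions I, d a = 1) :
    ∑ b, residualWeight η I d b = 1 := by
  have hpos : 0 < residualMass η I := sub_pos.2 hη
  simp only [residualWeight]
  rw [← Finset.sum_div, Finset.sum_coe_sort (G.infActions I) fun a => d a - η a,
    Finset.sum_sub_distrib, hd, ← residualMass, div_self hpos.ne']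

lemma residualWeight_mem_stdSimplex {I : G.Infoset} {d : G.Action → ℝ}
    (hη : ∑ a ∈ G.infActions I, η a < 1) (hd : ∑ a ∈ G.infActions I, d a = 1)
    (hηd : ∀ a ∈ G.infActions I, η a ≤ d a) :
    residualWeight η I d ∈ stdSimplex ℝ (G.infActions I) :=
  ⟨fun b => div_nonneg (sub_nonneg.2 (hηd b b.2)) (sub_pos.2 hη).le, sum_residualWeight hη hd⟩

lemma sum_residualWeight_mul_trembleProb {I : G.Infoset} {d : G.Action → ℝ}
    (hη : ∑ a ∈ G.infActions I, η a < 1) (hd : ∑ a ∈ G.infActions I, d a = 1)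
    {a : G.Action} (ha : a ∈ G.infActions I) :
    ∑ b, residualWeight η I d b * trembleProb η I b a = d a := by
  have hpos : 0 < residualMass η I := sub_pos.2 hη
  have hab : ∀ b : {b // b ∈ G.infActions I}, a = b ↔ (⟨a, ha⟩ : {b // b ∈ G.infActions I}) = b :=
    fun b => by rw [Subtype.ext_iff]
  simp only [trembleProb, mul_add, Finset.sum_add_distrib, ← Finset.sum_mul,
    sum_residualWeight hη hd, one_mul, hab, mul_ite, mul_zero, Finset.sum_ite_eq, Finset.mem_univ,
    if_true]
  rw [residualWeight, div_mul_cancel₀ _ hpos.ne', add_sub_cancel]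

variable {i : Fin n} {δi : G.ExtBehavior i}

/-- The probability that the recommended pure strategy `s` is replaced by `τ` when a player
simulates `δi` by redrawing her recommendation at each of her infosets independently. -/
def redrawProb (η : G.Action → ℝ) (δi : G.ExtBehavior i) (s τ : G.PureStrat i) : ℝ :=
  ∏ J, residualWeight η J.1 (δi J (ownRec s J)) (τ J)

lemma redrawProb_mem_stdSimplex (hη : ∀ I, ∑ a ∈ G.infActions I, η a < 1)
    (hδ : ∀ J r, ∑ a ∈ G.infActions J.1, δi J r a = 1)
    (hηδ : ∀ J r, ∀ a ∈ G.infActions J.1, η a ≤ δi J r a) (s : G.PureStrat i) :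
    redrawProb η δi s ∈ stdSimplex ℝ (G.PureStrat i) :=
  prod_mem_stdSimplex fun J => residualWeight_mem_stdSimplex (hη J.1) (hδ J _) (hηδ J _)

lemma prod_visits_eq_sum_residualWeight_mul (hη : ∀ I, ∑ a ∈ G.infActions I, η a < 1)
    {I : G.Infoset} {d : G.Action → ℝ} (hd : ∑ a ∈ G.infActions I, d a = 1)
    {z : List G.Action} (hz : z ∈ G.H) :
    ∏ k ∈ G.visits z I, d z[k] =
      ∑ b, residualWeight η I d b * ∏ k ∈ G.visits z I, trembleProb η I b z[k] := by
  rw [sum_mul_prod_of_card_le_one (card_visits_le_one hz I) (sum_residualWeight (hη I) hd)]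
  exact Finset.prod_congr rfl fun k hk => (sum_residualWeight_mul_trembleProb (hη I) hd
    (getElem_mem_infActions_of_mem_visits hz hk)).symm

lemma extReachAux_followRecPert_update (π : G.Profile) (τ : G.PureStrat i) {z : List G.Action}
    (hz : z ∈ G.H) :
    G.extReachAux (G.followRecPert η) (Function.update π i τ) [] z =
      (∏ k : Fin z.length, othersMoveProb (G.followRecPert η) π i (z.take k) z[k]) *
        ∏ J : {J : G.Infoset // G.infPlayer J = i},
          ∏ k ∈ G.visits z J.1, trembleProb η J.1 (τ J) z[k] := by
  rw [extReachAux_nil_eq_mul_prod_visits _ _ i, othersMoveProb_congr (fun _ _ => rfl)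
    fun j hj => Function.update_of_ne hj τ π, Function.update_self]
  congr 1
  exact Finset.prod_congr rfl fun J _ => Finset.prod_congr rfl fun k hk =>
    followRecPert_eq_trembleProb J _ (getElem_mem_infActions_of_mem_visits hz hk)

lemma extReachAux_update_eq_sum_redrawProb (hη : ∀ I, ∑ a ∈ G.infActions I, η a < 1)
    (hδ : ∀ J r, ∑ a ∈ G.infActions J.1, δi J r a = 1) (π : G.Profile) {z : List G.Action}
    (hz : z ∈ G.H) :
    G.extReachAux (Function.update (G.followRecPert η) i δi) π [] z =
      ∑ τ, redrawProb η δi (π i) τ *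
        G.extReachAux (G.followRecPert η) (Function.update π i τ) [] z := by
  rw [extReachAux_nil_eq_mul_prod_visits _ _ i, othersMoveProb_congr
    (fun j hj => Function.update_of_ne hj δi _) fun _ _ => rfl, Function.update_self]
  simp only [prod_visits_eq_sum_residualWeight_mul hη (hδ _ _) hz]
  rw [Fintype.prod_sum, Finset.mul_sum]
  refine Finset.sum_congr rfl fun τ _ => ?_
  rw [extReachAux_followRecPert_update π τ hz, redrawProb, Finset.prod_mul_distrib, mul_left_comm]

/-- Player `i`'s expected payoff when `π` is recommended and everyone obeys with trembles `η`: her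
payoff in the strategic-form game whose correlated equilibria are the distributions we look for. -/
def recPayoff (η : G.Action → ℝ) (i : Fin n) (π : G.Profile) : ℝ :=
  ∑ z ∈ G.terminalSet, G.extReachAux (G.followRecPert η) π [] z * G.util i z

lemma extEU_followRecPert (μ : G.Profile → ℝ) (i : Fin n) :
    G.extEU μ i (G.followRecPert η) = ∑ π, μ π * recPayoff η i π := rfl

lemma extEU_update_eq_sum_redrawProb (hη : ∀ I, ∑ a ∈ G.infActions I, η a < 1)
    (hδ : ∀ J r, ∑ a ∈ G.infActions J.1, δi J r a = 1) (μ : G.Profile → ℝ) :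
    G.extEU μ i (Function.update (G.followRecPert η) i δi) =
      ∑ π, μ π * ∑ τ, redrawProb η δi (π i) τ * recPayoff η i (Function.update π i τ) := by
  refine Finset.sum_congr rfl fun π _ => congrArg (μ π * ·) ?_
  simp only [recPayoff, Finset.mul_sum]
  rw [Finset.sum_comm]
  refine Finset.sum_congr rfl fun z hz => ?_
  rw [extReachAux_update_eq_sum_redrawProb hη hδ π (Finset.mem_filter.1 hz).1, Finset.sum_mul]
  simp only [mul_assoc]

end Deviation

instance (i : Fin n) : Nonempty (G.PureStrat i) :=
  ⟨fun J => ⟨_, (G.infActions_nonempty J.1).choose_spec⟩⟩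

end EFG

/-- Since `η = 0` is allowed, this includes the existence of an extensive-form correlated
equilibrium of the unperturbed game. -/
theorem exists_pert_ext_ne_general {n : ℕ} (G : EFG n) (η : G.Action → ℝ)
    (hη_nonneg : ∀ I, ∀ a ∈ G.infActions I, 0 ≤ η a)
    (hη_sum : ∀ I, ∑ a ∈ G.infActions I, η a < 1) :
    ∃ μ : G.Profile → ℝ, G.IsDistribution μ ∧ G.ExtIsPertNE μ η (G.followRecPert η) := by
  have hη_sum_le := fun I => (hη_sum I).le
  obtain ⟨μ, hμ⟩ := exists_isCorrelatedEquilibrium (EFG.recPayoff (G := G) η)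
  refine ⟨μ, hμ.mem_stdSimplex, EFG.isExtBehavior_followRecPert hη_nonneg hη_sum_le,
    EFG.extRespects_followRecPert hη_sum_le, fun i δi hδ hηδ => ?_⟩
  have hδi : ∀ J r, ∑ a ∈ G.infActions J.1, δi J r a = 1 := fun J r => by
    simpa using (hδ i J r).2.1
  have hηδi : ∀ J r, ∀ a ∈ G.infActions J.1, η a ≤ δi J r a := fun J r => by
    simpa using hηδ i J r
  rw [EFG.extEU_update_eq_sum_redrawProb hη_sum hδi, EFG.extEU_followRecPert]
  exact hμ.sum_mul_deviation_le i _ (EFG.redrawProb_mem_stdSimplex hη_sum hδi hηδi)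

/-- For every lower-bound function `η` there exists a distribution
`μ ∈ Δ_Π` such that following recommendations is an NE of the perturbed extended
game `(Γ^ext(μ), η)` (hence the trembling LP is always unbounded). -/
theorem exists_pert_ext_ne {n : ℕ} (G : EFG n) (η : G.Action → ℝ)
    (hη : G.IsLowerBound η) :
    ∃ μ : G.Profile → ℝ, G.IsDistribution μ ∧ G.ExtIsPertNE μ η (G.followRecPert η) := by
  exact exists_pert_ext_ne_general G η (fun _ a _ => (hη.1 a).1.le) hη.2
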